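/- Let (A,B,C,D) be a minimal state-space realization of an m×m transfer function R(s) = C(sI − A)⁻¹B + D. Then the system is strictly negative imaginary if and only if the following conditions all hold: (1) A is Hurwitz, D = Dᵀ, and rank(B) = rank(C) = m; (2) there exist a real symmetric matrix Y ≻ 0 and a real matrix L with LᵀL = −AY − YAᵀ such that AY + YAᵀ ⪯ 0 and B + AYCᵀ = 0; and (3) for Y and L as in (2), the matrix M(jω) = L·Y⁻¹·A⁻¹·(jωI − A)⁻¹·B has full column rank m for every ω ∈ (0,∞). -/

import Mathlib

open Matrix Filter Topology ComplexOrder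

/-- The (complex) eigenvalues of a real square matrix. -/
noncomputable def eigs {k : Type*} [Fintype k] [DecidableEq k] (A : Matrix k k ℝ) : Set ℂ :=
  spectrum ℂ (A.map Complex.ofReal)

/-- A real square matrix is Hurwitz if all of its (complex) eigenvalues have negative real
part. -/
noncomputable def IsHurwitz {k : Type*} [Fintype k] [DecidableEq k] (A : Matrix k k ℝ) : Prop :=
  ∀ μ ∈ eigs A, μ.re < 0

/-- Transfer function `R(s) = C (sI - A)⁻¹ B + D` of a real state-space system, as a
complex matrix. -/
noncomputable def tf {n m : ℕ} (A : Matrix (Fin n) (Fin n) ℝ) (B : Matrix (Fin n) (Fin m) ℝ)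
    (C : Matrix (Fin m) (Fin n) ℝ) (D : Matrix (Fin m) (Fin m) ℝ) (s : ℂ) :
    Matrix (Fin m) (Fin m) ℂ :=
  C.map (Complex.ofReal) * (s • (1 : Matrix (Fin n) (Fin n) ℂ) - A.map Complex.ofReal)⁻¹ *
      B.map Complex.ofReal + D.map Complex.ofReal

/-- A state-space realization `(A,B,C,D)` is minimal if the controllability matrix and the
observability matrix both have rank `n`. -/
def IsMinimal {n m : ℕ} (A : Matrix (Fin n) (Fin n) ℝ) (B : Matrix (Fin n) (Fin m) ℝ)
    (C : Matrix (Fin m) (Fin n) ℝ) : Prop :=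
  (Matrix.of fun (i : Fin n) (p : Fin n × Fin m) => (A ^ (p.1 : ℕ) * B) i p.2).rank = n ∧
  (Matrix.of fun (p : Fin n × Fin m) (i : Fin n) => (C * A ^ (p.1 : ℕ)) p.2 i).rank = n

/-- The system `(A,B,C,D)` is negative imaginary (NI). -/
noncomputable def IsNI {n m : ℕ} (A : Matrix (Fin n) (Fin n) ℝ) (B : Matrix (Fin n) (Fin m) ℝ)
    (C : Matrix (Fin m) (Fin n) ℝ) (D : Matrix (Fin m) (Fin m) ℝ) : Prop :=
  (∀ μ ∈ eigs A, μ ≠ 0 ∧ μ.re ≤ 0) ∧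
  (∀ ω : ℝ, 0 < ω → (Complex.I * ω) ∉ eigs A →
    (Complex.I • (tf A B C D (Complex.I * ω) - (tf A B C D (Complex.I * ω))ᴴ)).PosSemidef) ∧
  (∀ ω : ℝ, 0 < ω → (Complex.I * ω) ∈ eigs A →
    ∃ K : Matrix (Fin m) (Fin m) ℂ,
      Tendsto (fun s : ℂ => (s - Complex.I * ω) • Complex.I • tf A B C D s)
        (𝓝[≠] (Complex.I * ω)) (𝓝 K) ∧ K.PosSemidef)

/-- The system `(A,B,C,D)` is strictly negative imaginary (SNI). -/
noncomputable def IsSNI {n m : ℕ} (A : Matrix (Fin n) (Fin n) ℝ) (B : Matrix (Fin n) (Fin m) ℝ)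
    (C : Matrix (Fin m) (Fin n) ℝ) (D : Matrix (Fin m) (Fin m) ℝ) : Prop :=
  IsHurwitz A ∧
  (∀ ω : ℝ, 0 < ω →
    (Complex.I • (tf A B C D (Complex.I * ω) - (tf A B C D (Complex.I * ω))ᴴ)).PosDef)

/-!
The existence of `Y` is a statement of Kalman–Yakubovich–Popov type, obtained here by duality.
Let `F = [Aᴴ 0]` and `G = [1 Cᴴ]`. If no Hermitian `Y` satisfies `A Y + Y Aᴴ ⪯ 0` and
`B + A Y Cᴴ = 0`, separating a point from a closed cone gives a multiplier `Z ⪰ 0` with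
`F Z Gᴴ + G Z Fᴴ = 0`. Such a `Z` factors as `V Vᴴ` with columns that are eigenvectors of the pencil
`F - s G` for `s ∈ iℝ ∪ {∞}`, and on these vectors the separating functional is, up to sign, the
Hermitian part of `s C (s I - A)⁻¹ B`, which the negative imaginary property makes nonnegative;
this contradicts strict separation. Observability makes the cone closed, controllability makes `Y`
definite, and the real part of a complex solution is a real one.

Given `Y`, one has `j (R(jω) - R(jω)ᴴ) = ω M(jω)ᴴ M(jω)` for `ω > 0`, so this matrix is positive
definite exactly when `M(jω)` has full column rank.
-/

theorem isClosed_image_of_eq_zero_of_map_eq_zero {V W : Type*} [NormedAddCommGroup V]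
    [NormedSpace ℝ V] [FiniteDimensional ℝ V] [NormedAddCommGroup W] [NormedSpace ℝ W]
    (f : V →L[ℝ] W) (K : ProperCone ℝ V) (hf : ∀ x ∈ K, f x = 0 → x = 0) :
    IsClosed (f '' K) := by
  have : ProperSpace V := FiniteDimensional.proper ℝ V
  have compact_sphere : IsCompact ((K : Set V) ∩ Metric.sphere 0 1) :=
    (isCompact_sphere 0 1).inter_left K.isClosed
  have pos_on_sphere : ∀ x ∈ (K : Set V) ∩ Metric.sphere 0 1, 0 < ‖f x‖ := by
    rintro x ⟨hxK, hx⟩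
    refine norm_pos_iff.2 fun h => ?_
    simp [hf x hxK h] at hx
  obtain ⟨c, hc, hcf⟩ := compact_sphere.exists_forall_le' f.continuous.norm.continuousOn
    pos_on_sphere
  have norm_le : ∀ x ∈ K, ‖x‖ ≤ ‖f x‖ / c := by
    intro x hx
    rcases eq_or_ne x 0 with rfl | hx0
    · simp
    have := hcf (‖x‖⁻¹ • x) ⟨K.smul_mem (r := ‖x‖⁻¹) hx (by positivity), by simp [norm_smul, hx0]⟩
    rw [map_smul, norm_smul, norm_inv, norm_norm, inv_mul_eq_div,
      le_div_iff₀ (norm_pos_iff.2 hx0)] at this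
    rwa [le_div_iff₀ hc, mul_comm]
  refine isSeqClosed_iff_isClosed.1 fun y y₀ hy hlim => ?_
  choose x hxK hxy using hy
  obtain ⟨R, hR⟩ := (Metric.isBounded_range_of_tendsto y hlim).exists_norm_le
  have x_mem_closedBall : ∀ k, x k ∈ Metric.closedBall 0 (R / c) := fun k =>
    mem_closedBall_zero_iff.2 <| (norm_le _ (hxK k)).trans <| by
      rw [hxy]; gcongr; exact hR _ (Set.mem_range_self k)
  obtain ⟨x₀, -, φ, hφ, hx₀⟩ := (isCompact_closedBall 0 (R / c)).tendsto_subseq x_mem_closedBall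
  refine ⟨x₀, K.isClosed.mem_of_tendsto hx₀ (.of_forall fun k => hxK _),
    tendsto_nhds_unique ((f.continuous.tendsto x₀).comp hx₀) ?_⟩
  simpa only [Function.comp_def, hxy] using hlim.comp hφ.tendsto_atTop

theorem exists_dual_nonneg_of_notMem_image {V W : Type*} [NormedAddCommGroup V]
    [NormedSpace ℝ V] [FiniteDimensional ℝ V] [NormedAddCommGroup W] [NormedSpace ℝ W]
    (f : V →L[ℝ] W) (K : ProperCone ℝ V) (hf : ∀ x ∈ K, f x = 0 → x = 0) {b : W}
    (hb : b ∉ f '' K) :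
    ∃ ℓ : StrongDual ℝ W, (∀ x ∈ K, 0 ≤ ℓ (f x)) ∧ ℓ b < 0 := by
  let imageCone : ProperCone ℝ W :=
    ⟨K.toPointedCone.map f.toLinearMap, isClosed_image_of_eq_zero_of_map_eq_zero f K hf⟩
  obtain ⟨ℓ, hℓ, hℓb⟩ := imageCone.hyperplane_separation_point (x₀ := b) hb
  exact ⟨ℓ, fun x hx => hℓ _ ⟨x, hx, rfl⟩, hℓb⟩

theorem exists_isHermitian_eq_re_trace_mul {p : Type*} [Fintype p]
    (f : Matrix p p ℂ →ₗ[ℝ] ℝ) :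
    ∃ Z : Matrix p p ℂ, Z.IsHermitian ∧ ∀ N : Matrix p p ℂ, N.IsHermitian →
      f N = (trace (Z * N)).re := by
  classical
  let g : Matrix p p ℂ →ₗ[ℂ] ℂ := Module.Dual.extendRCLike f
  let Z : Matrix p p ℂ := of fun i j => g (single j i 1)
  have g_eq_trace (N : Matrix p p ℂ) : g N = trace (Z * N) := by
    conv_lhs => rw [matrix_eq_sum_single N]
    simp only [map_sum, trace, diag, mul_apply, Z, of_apply]
    rw [Finset.sum_comm]
    refine Finset.sum_congr rfl fun i _ => Finset.sum_congr rfl fun j _ => ?_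
    have : single j i (N j i) = N j i • single j i (1 : ℂ) := by simp
    rw [this, map_smul, smul_eq_mul, mul_comm]
  refine ⟨(2⁻¹ : ℝ) • (Z + Zᴴ), ?_, fun N hN => ?_⟩
  · simp [IsHermitian, add_comm]
  have hf : f N = (trace (Z * N)).re := by
    rw [← g_eq_trace]; exact (Module.Dual.re_extendRCLike_apply (𝕜 := ℂ) f N).symm
  have re_trace_conjTranspose : (trace (Zᴴ * N)).re = (trace (Z * N)).re := by
    rw [← hN.eq, ← conjTranspose_mul, trace_conjTranspose, trace_mul_comm, hN.eq]
    exact Complex.conj_re _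
  rw [hf, Matrix.smul_mul, trace_smul, Matrix.add_mul, trace_add, Complex.real_smul,
    Complex.re_ofReal_mul, Complex.add_re, re_trace_conjTranspose]
  ring

section ImaginaryEigenvector

variable {n p : Type*} [Fintype p]

theorem exists_mul_mul_eq_self_and_isHermitian [Fintype n] (G : Matrix n p ℂ) :
    ∃ G' : Matrix p n ℂ, G * G' * G = G ∧ (G' * G).IsHermitian := by
  classical
  set H := Gᴴ * G with hH
  have hsa : IsSelfAdjoint H := isHermitian_conjTranspose_mul_self G
  have continuousOn (f : ℝ → ℝ) : ContinuousOn f (spectrum ℝ H) :=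
    finite_real_spectrum.continuousOn f
  set R := cfc (fun x : ℝ => x⁻¹) H
  have RH_eq : R * H = cfc (fun x : ℝ => x⁻¹ * x) H := by
    rw [cfc_mul _ _ H (continuousOn _) (continuousOn _), cfc_id' ℝ H hsa]
  have H_mul_RH : H * (R * H) = H := by
    calc H * (R * H) = cfc (fun x : ℝ => x * (x⁻¹ * x)) H := by
          rw [cfc_mul _ _ H (continuousOn _) (continuousOn _), cfc_id' ℝ H hsa, RH_eq]
      _ = H := by simp only [← mul_assoc, mul_inv_mul_cancel, cfc_id' ℝ H hsa]
  refine ⟨R * Gᴴ, ?_, ?_⟩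
  · have : G * (1 - R * H) = 0 := by
      rw [← conjTranspose_mul_self_eq_zero, conjTranspose_mul, Matrix.mul_assoc,
        ← Matrix.mul_assoc Gᴴ, ← hH, Matrix.mul_sub, Matrix.mul_one, H_mul_RH, sub_self,
        Matrix.mul_zero]
    rw [Matrix.mul_sub, Matrix.mul_one, sub_eq_zero] at this
    rw [Matrix.mul_assoc, Matrix.mul_assoc R, ← hH, ← this]
  · rw [Matrix.mul_assoc, ← hH, RH_eq]
    exact cfc_predicate (fun x : ℝ => x⁻¹ * x) H

theorem exists_skew_factor_of_add_eq_zero [Finite n] {F G : Matrix n p ℂ}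
    (h : F * Gᴴ + G * Fᴴ = 0) :
    ∃ P S : Matrix p p ℂ, P.IsHermitian ∧ P * P = P ∧ G * P = G ∧ Sᴴ = -S ∧ G * S = F * P := by
  cases nonempty_fintype n
  obtain ⟨G', hG', hP⟩ := exists_mul_mul_eq_self_and_isHermitian G
  set P := G' * G with hP_def
  have GP_eq : G * P = G := by rw [hP_def, ← Matrix.mul_assoc, hG']
  have FG_eq : F * Gᴴ = -(G * Fᴴ) := eq_neg_of_add_eq_zero_left h
  have P_eq : Gᴴ * G'ᴴ = P := by rw [← conjTranspose_mul, hP.eq]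
  refine ⟨P, G' * (F * Gᴴ) * G'ᴴ, hP, by rw [hP_def, Matrix.mul_assoc, ← hP_def, GP_eq], GP_eq,
    ?_, ?_⟩
  · have FG_skew : (F * Gᴴ)ᴴ = -(F * Gᴴ) := by
      rw [conjTranspose_mul, conjTranspose_conjTranspose, FG_eq, neg_neg]
    rw [conjTranspose_mul, conjTranspose_mul, FG_skew, conjTranspose_conjTranspose]
    simp only [Matrix.neg_mul, Matrix.mul_neg, Matrix.mul_assoc]
  · calc G * (G' * (F * Gᴴ) * G'ᴴ) = -(G * G' * G * (Fᴴ * G'ᴴ)) := by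
          rw [FG_eq]; simp only [Matrix.neg_mul, Matrix.mul_neg, Matrix.mul_assoc]
      _ = -(G * Fᴴ) * G'ᴴ := by rw [hG', Matrix.neg_mul, Matrix.mul_assoc]
      _ = F * P := by rw [← FG_eq, Matrix.mul_assoc, P_eq]

/-- `v` is a generalized eigenvector of the pencil `F - s G` for an eigenvalue `s` on the extended
imaginary axis `iℝ ∪ {∞}`; the first alternative is `s = ∞`. The vector `v` may be zero. -/
def IsImaginaryEigenvector (F G : Matrix n p ℂ) (v : p → ℂ) : Prop :=
  G *ᵥ v = 0 ∨ ∃ ω : ℝ, F *ᵥ v = (Complex.I * ω) • (G *ᵥ v)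

theorem exists_mul_conjTranspose_eq_one_of_add_eq_zero [Finite n] [DecidableEq p]
    {F G : Matrix n p ℂ} (h : F * Gᴴ + G * Fᴴ = 0) :
    ∃ V : Matrix p (p ⊕ p) ℂ, V * Vᴴ = 1 ∧ ∀ k, IsImaginaryEigenvector F G (V.col k) := by
  obtain ⟨P, S, hP, hPP, hGP, hS, hGS⟩ := exists_skew_factor_of_add_eq_zero h
  have H_isHermitian : (-Complex.I • S).IsHermitian := by simp [IsHermitian, hS]
  let U : Matrix p p ℂ := H_isHermitian.eigenvectorUnitary.val
  have U_mul : U * Uᴴ = 1 := mem_unitaryGroup_iff.1 H_isHermitian.eigenvectorUnitary.2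
  have S_mulVec_col (k) : S *ᵥ U.col k = (Complex.I * H_isHermitian.eigenvalues k) • U.col k := by
    have : -Complex.I • (S *ᵥ U.col k) = (H_isHermitian.eigenvalues k : ℂ) • U.col k := by
      rw [← smul_mulVec]; exact H_isHermitian.mulVec_eigenvectorBasis k
    rw [mul_smul, ← this, smul_smul]; simp
  refine ⟨fromCols (P * U) ((1 - P) * U), ?_, ?_⟩
  · rw [conjTranspose_fromCols_eq_fromRows_conjTranspose, fromCols_mul_fromRows, conjTranspose_mul,
      conjTranspose_mul, conjTranspose_sub, conjTranspose_one, hP.eq, Matrix.mul_assoc,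
      ← Matrix.mul_assoc U, U_mul, Matrix.one_mul, Matrix.mul_assoc, ← Matrix.mul_assoc U, U_mul,
      Matrix.one_mul, Matrix.sub_mul, Matrix.mul_sub, Matrix.mul_sub, hPP]
    simp
  · rintro (k | k)
    · refine .inr ⟨H_isHermitian.eigenvalues k, ?_⟩
      change F *ᵥ (P *ᵥ U.col k) = _ • (G *ᵥ (P *ᵥ U.col k))
      rw [mulVec_mulVec, mulVec_mulVec, hGP, ← hGS, ← mulVec_mulVec, S_mulVec_col, mulVec_smul]
    · refine .inl ?_
      change G *ᵥ ((1 - P) *ᵥ U.col k) = 0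
      rw [mulVec_mulVec, Matrix.mul_sub, hGP, Matrix.mul_one, sub_self, zero_mulVec]

open scoped Matrix.Norms.L2Operator MatrixOrder in
theorem exists_mul_conjTranspose_eq_of_add_eq_zero [Finite n] {F G : Matrix n p ℂ}
    {Z : Matrix p p ℂ} (hZ : Z.PosSemidef) (h : F * Z * Gᴴ + G * Z * Fᴴ = 0) :
    ∃ V : Matrix p (p ⊕ p) ℂ, V * Vᴴ = Z ∧ ∀ k, IsImaginaryEigenvector F G (V.col k) := by
  classical
  obtain ⟨W, rfl⟩ : ∃ W : Matrix p p ℂ, Z = W * Wᴴ :=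
    CStarAlgebra.nonneg_iff_eq_mul_star_self.1 hZ.nonneg
  obtain ⟨V, hV, hcol⟩ := exists_mul_conjTranspose_eq_one_of_add_eq_zero (F := F * W) (G := G * W)
    (by simpa only [conjTranspose_mul, Matrix.mul_assoc] using h)
  refine ⟨W * V, ?_, fun k => ?_⟩
  · rw [conjTranspose_mul, Matrix.mul_assoc, ← Matrix.mul_assoc V, hV, Matrix.one_mul]
  · change IsImaginaryEigenvector F G (W *ᵥ V.col k)
    simpa only [IsImaginaryEigenvector, mulVec_mulVec] using hcol k

end ImaginaryEigenvector

/-- The Lyapunov operator `Y ↦ Fᴴ Y G + Gᴴ Y F` of the matrix pencil `F - s G`. With `F = Aᴴ` and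
`G = 1` it is the classical `Y ↦ A Y + Y Aᴴ`. -/
def pencilLyapunov {n p : Type*} [Fintype n] (F G : Matrix n p ℂ) :
    Matrix n n ℂ →ₗ[ℂ] Matrix p p ℂ where
  toFun Y := Fᴴ * Y * G + Gᴴ * Y * F
  map_add' Y₁ Y₂ := by simp only [Matrix.mul_add, Matrix.add_mul]; abel
  map_smul' c Y := by simp

section Pencil

variable {n p : Type*} [Fintype n]

theorem pencilLyapunov_apply (F G : Matrix n p ℂ) (Y : Matrix n n ℂ) :
    pencilLyapunov F G Y = Fᴴ * Y * G + Gᴴ * Y * F :=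
  rfl

theorem isHermitian_pencilLyapunov (F G : Matrix n p ℂ) {Y : Matrix n n ℂ} (hY : Y.IsHermitian) :
    (pencilLyapunov F G Y).IsHermitian := by
  simp [IsHermitian, pencilLyapunov_apply, hY.eq, Matrix.mul_assoc, add_comm]

open scoped Matrix.Norms.L2Operator MatrixOrder in
theorem exists_dual_nonneg_of_forall_not_posSemidef [Finite p] (F G : Matrix n p ℂ)
    (N : Matrix p p ℂ)
    (hker : ∀ Y, Y.IsHermitian → (-pencilLyapunov F G Y).PosSemidef → Y = 0)
    (hno : ∀ Y, Y.IsHermitian → ¬(-(N + pencilLyapunov F G Y)).PosSemidef) :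
    ∃ ℓ : Matrix p p ℂ →ₗ[ℝ] ℝ, (∀ Y Q, Y.IsHermitian → Q.PosSemidef →
      0 ≤ ℓ (pencilLyapunov F G Y + Q)) ∧ 0 < ℓ N := by
  classical
  cases nonempty_fintype p
  let K : ProperCone ℝ (Matrix n n ℂ × Matrix p p ℂ) :=
    { carrier := {x | star x.1 = x.1 ∧ 0 ≤ x.2}
      add_mem' := fun hx hy => ⟨by simp [hx.1, hy.1], add_nonneg hx.2 hy.2⟩
      zero_mem' := by simp
      smul_mem' := fun c x hx =>
        ⟨(star_smul (c : ℝ) x.1).trans (congrArg _ hx.1), smul_nonneg c.2 hx.2⟩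
      isClosed' := (isClosed_eq (by fun_prop) (by fun_prop)).inter
        (isClosed_le continuous_const continuous_snd) }
  let T : (Matrix n n ℂ × Matrix p p ℂ) →L[ℝ] Matrix p p ℂ := LinearMap.toContinuousLinearMap
    (((pencilLyapunov F G).restrictScalars ℝ).coprod LinearMap.id)
  have T_apply (Y Q) : T (Y, Q) = pencilLyapunov F G Y + Q := rfl
  have T_eq_zero (x) (hx : x ∈ K) (h : T x = 0) : x = 0 := by
    have hQ : -pencilLyapunov F G x.1 = x.2 := neg_eq_of_add_eq_zero_right h
    have hY : x.1 = 0 := hker x.1 hx.1 (hQ ▸ nonneg_iff_posSemidef.1 hx.2)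
    exact Prod.ext hY (by rw [← hQ, hY, map_zero, neg_zero, Prod.snd_zero])
  have neg_notMem : -N ∉ T '' K := by
    rintro ⟨⟨Y, Q⟩, ⟨hY, hQ⟩, h⟩
    have hQ_eq : Q = -(N + pencilLyapunov F G Y) := by rw [neg_add, ← h, T_apply]; abel
    exact hno Y hY (hQ_eq ▸ nonneg_iff_posSemidef.1 hQ)
  obtain ⟨ℓ, hℓ, hℓN⟩ := exists_dual_nonneg_of_notMem_image T K T_eq_zero neg_notMem
  exact ⟨ℓ.toLinearMap, fun Y Q hY hQ => hℓ (Y, Q) ⟨hY, hQ.nonneg⟩, by simpa using hℓN⟩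

variable [Fintype p]

theorem trace_mul_pencilLyapunov (F G : Matrix n p ℂ) (Y : Matrix n n ℂ) (Z : Matrix p p ℂ) :
    trace (Z * pencilLyapunov F G Y) = trace (Y * (F * Z * Gᴴ + G * Z * Fᴴ)) := by
  have trace_cycle (F G : Matrix n p ℂ) : trace (Z * (Fᴴ * Y * G)) = trace (Y * (G * Z * Fᴴ)) := by
    rw [trace_mul_comm, Matrix.mul_assoc, Matrix.mul_assoc, trace_mul_comm, Matrix.mul_assoc]
  rw [pencilLyapunov_apply, Matrix.mul_add, trace_add, trace_cycle, trace_cycle, ← trace_add,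
    ← Matrix.mul_add, add_comm]

theorem posSemidef_of_re_trace_mul_nonneg {Z : Matrix p p ℂ} (hZ : Z.IsHermitian)
    (h : ∀ Q : Matrix p p ℂ, Q.PosSemidef → 0 ≤ (trace (Z * Q)).re) : Z.PosSemidef := by
  refine .of_dotProduct_mulVec_nonneg hZ fun x => ?_
  have := h _ (posSemidef_vecMulVec_self_star x)
  rw [mul_vecMulVec, trace_vecMulVec, dotProduct_comm] at this
  exact Complex.nonneg_iff.2 ⟨this, (hZ.im_star_dotProduct_mulVec_self x).symm⟩

theorem trace_mul_mul_conjTranspose_eq_sum {q : Type*} [Fintype q]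
    (N : Matrix p p ℂ) (V : Matrix p q ℂ) :
    trace (V * Vᴴ * N) = ∑ k, star (V.col k) ⬝ᵥ (N *ᵥ V.col k) := by
  rw [Matrix.mul_assoc, trace_mul_comm, Matrix.mul_assoc]
  rfl

theorem exists_multiplier_of_forall_not_posSemidef (F G : Matrix n p ℂ)
    {N : Matrix p p ℂ} (hN : N.IsHermitian)
    (hker : ∀ Y, Y.IsHermitian → (-pencilLyapunov F G Y).PosSemidef → Y = 0)
    (hno : ∀ Y, Y.IsHermitian → ¬(-(N + pencilLyapunov F G Y)).PosSemidef) :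
    ∃ Z : Matrix p p ℂ, Z.PosSemidef ∧ F * Z * Gᴴ + G * Z * Fᴴ = 0 ∧ 0 < (trace (Z * N)).re := by
  obtain ⟨ℓ, hℓ, hℓN⟩ := exists_dual_nonneg_of_forall_not_posSemidef F G N hker hno
  obtain ⟨Z, hZ, hℓZ⟩ := exists_isHermitian_eq_re_trace_mul ℓ
  set S := F * Z * Gᴴ + G * Z * Fᴴ with hS
  have S_isHermitian : S.IsHermitian := by
    simp [IsHermitian, hS, hZ.eq, Matrix.mul_assoc, add_comm]
  have trace_nonpos : (trace (Sᴴ * S)).re ≤ 0 := by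
    have := hℓ (-S) 0 S_isHermitian.neg .zero
    rw [add_zero, hℓZ _ (isHermitian_pencilLyapunov F G S_isHermitian.neg),
      trace_mul_pencilLyapunov, Matrix.neg_mul, trace_neg, Complex.neg_re] at this
    rw [S_isHermitian.eq]
    linarith
  refine ⟨Z, posSemidef_of_re_trace_mul_nonneg hZ fun Q hQ => ?_, ?_, hℓZ N hN ▸ hℓN⟩
  · simpa [hℓZ Q hQ.isHermitian] using hℓ 0 Q isHermitian_zero hQ
  · have trace_nonneg := Complex.nonneg_iff.1 (posSemidef_conjTranspose_mul_self S).trace_nonneg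
    exact trace_conjTranspose_mul_self_eq_zero_iff.1 <|
      Complex.ext (trace_nonpos.antisymm trace_nonneg.1) trace_nonneg.2.symm

theorem exists_posSemidef_neg_add_pencilLyapunov {F G : Matrix n p ℂ}
    {N : Matrix p p ℂ} (hN : N.IsHermitian)
    (hker : ∀ Y, Y.IsHermitian → (-pencilLyapunov F G Y).PosSemidef → Y = 0)
    (hnonpos : ∀ v, IsImaginaryEigenvector F G v → (star v ⬝ᵥ (N *ᵥ v)).re ≤ 0) :
    ∃ Y, Y.IsHermitian ∧ (-(N + pencilLyapunov F G Y)).PosSemidef := by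
  by_contra! hno
  obtain ⟨Z, hZ, hZ_eq, hZN⟩ := exists_multiplier_of_forall_not_posSemidef F G hN hker hno
  obtain ⟨V, rfl, hV⟩ := exists_mul_conjTranspose_eq_of_add_eq_zero hZ hZ_eq
  rw [trace_mul_mul_conjTranspose_eq_sum, Complex.re_sum] at hZN
  exact hZN.not_ge (Finset.sum_nonpos fun k _ => hnonpos _ (hV k))

end Pencil

theorem tendsto_smul_resolvent_cobounded {𝕜 𝔸 : Type*} [NontriviallyNormedField 𝕜]
    [NormedRing 𝔸] [NormedAlgebra 𝕜 𝔸] [CompleteSpace 𝔸] (a : 𝔸) :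
    Tendsto (fun s : 𝕜 => s • resolvent a s) (Bornology.cobounded 𝕜) (𝓝 1) := by
  have smul_resolvent : ∀ᶠ s in Bornology.cobounded 𝕜,
      1 + resolvent a s * a = s • resolvent a s := by
    filter_upwards [spectrum.eventually_isUnit_resolvent (𝕜 := 𝕜) a] with s hs
    have := Ring.inverse_mul_cancel _ (spectrum.isUnit_resolvent.2 hs)
    rw [mul_sub, ← Algebra.commutes, ← Algebra.smul_def, sub_eq_iff_eq_add] at this
    exact this.symm
  refine Tendsto.congr' smul_resolvent ?_
  simpa using ((spectrum.resolvent_tendsto_cobounded (𝕜 := 𝕜) a).mul_const a).const_add 1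

theorem mem_resolventSet_of_re_nonneg {𝔸 : Type*} [Ring 𝔸] [Algebra ℂ 𝔸] {a : 𝔸}
    (ha : ∀ μ ∈ spectrum ℂ a, μ.re < 0) {s : ℂ} (hs : 0 ≤ s.re) : s ∈ resolventSet ℂ a :=
  spectrum.notMem_iff.1 fun h => (ha s h).not_ge hs

theorem isUnit_of_forall_re_neg {𝔸 : Type*} [Ring 𝔸] [Algebra ℂ 𝔸] {a : 𝔸}
    (ha : ∀ μ ∈ spectrum ℂ a, μ.re < 0) : IsUnit a :=
  (spectrum.zero_notMem_iff ℂ).1 fun h => (ha 0 h).false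

section HalfPlane

variable {𝔸 : Type*} [NormedRing 𝔸] [NormedAlgebra ℂ 𝔸] [CompleteSpace 𝔸] {a : 𝔸}

-- Phragmén–Lindelöf for `s ↦ exp (-ℓ (resolvent a s))`, which tends to `1` at infinity.
theorem re_apply_resolvent_nonneg (ha : ∀ μ ∈ spectrum ℂ a, μ.re < 0) (ℓ : StrongDual ℂ 𝔸)
    (h : ∀ ω : ℝ, 0 ≤ (ℓ (resolvent a (Complex.I * ω))).re) {s : ℂ} (hs : 0 ≤ s.re) :
    0 ≤ (ℓ (resolvent a s)).re := by
  let f : ℂ → ℂ := fun s => Complex.exp (-ℓ (resolvent a s))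
  have norm_f (s : ℂ) : ‖f s‖ = Real.exp (-(ℓ (resolvent a s)).re) := by simp [f, Complex.norm_exp]
  have f_tendsto : Tendsto f (Bornology.cobounded ℂ) (𝓝 1) := by
    have := (ℓ.continuous.tendsto _).comp (spectrum.resolvent_tendsto_cobounded (𝕜 := ℂ) a)
    simpa [f, Function.comp_def] using (Complex.continuous_exp.tendsto _).comp this.neg
  have f_diff : DiffContOnCl ℂ f {s | 0 < s.re} := by
    refine DifferentiableOn.diffContOnCl fun s hs => ?_
    rw [Complex.closure_setOfPred_lt_re] at hs
    have := spectrum.hasDerivAt_resolvent_const_left (mem_resolventSet_of_re_nonneg ha hs)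
    exact (ℓ.differentiableAt.comp s this.differentiableAt).neg.cexp.differentiableWithinAt
  have norm_f_le : ‖f s‖ ≤ 1 := by
    refine PhragmenLindelof.right_half_plane_of_bounded_on_real f_diff ⟨0, two_pos, 0, ?_⟩ ?_ ?_ hs
    · simpa using (f_tendsto.isBigO_one ℝ).mono inf_le_left
    · exact (f_tendsto.comp (RCLike.tendsto_ofReal_atTop_cobounded ℂ)).norm.isBoundedUnder_le
    · intro ω
      rw [norm_f, Real.exp_le_one_iff, mul_comm]
      exact neg_nonpos.2 (h ω)
  rwa [norm_f, Real.exp_le_one_iff, neg_nonpos] at norm_f_le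

theorem re_apply_one_nonneg (ha : ∀ μ ∈ spectrum ℂ a, μ.re < 0) (ℓ : StrongDual ℂ 𝔸)
    (h : ∀ ω : ℝ, 0 ≤ (ℓ (resolvent a (Complex.I * ω))).re) : 0 ≤ (ℓ 1).re := by
  have smul_tendsto : Tendsto (fun t : ℝ => (ℓ ((t : ℂ) • resolvent a (t : ℂ))).re) atTop
      (𝓝 (ℓ 1).re) :=
    (Complex.continuous_re.comp ℓ.continuous).tendsto _ |>.comp <|
      (tendsto_smul_resolvent_cobounded a).comp (RCLike.tendsto_ofReal_atTop_cobounded ℂ)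
  refine ge_of_tendsto smul_tendsto ((eventually_ge_atTop 0).mono fun t ht => ?_)
  rw [map_smul, smul_eq_mul, Complex.re_ofReal_mul]
  exact mul_nonneg ht (re_apply_resolvent_nonneg ha ℓ h (by simpa using ht))

end HalfPlane

theorem re_star_dotProduct_conjTranspose_mulVec {m n : Type*} [Fintype m] [Fintype n]
    (M : Matrix m n ℂ) (x : n → ℂ) (y : m → ℂ) :
    (star x ⬝ᵥ (Mᴴ *ᵥ y)).re = (star y ⬝ᵥ (M *ᵥ x)).re := by
  rw [dotProduct_mulVec, ← star_mulVec, dotProduct_comm, dotProduct_star, dotProduct_comm (M *ᵥ x)]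
  exact Complex.conj_re _

section Lyapunov

variable {n : Type*} [Fintype n] [DecidableEq n] {A Y : Matrix n n ℂ}

theorem resolvent_mul_smul_one_sub {s : ℂ} (hs : s ∈ resolventSet ℂ A) :
    resolvent A s * (s • 1 - A) = 1 := by
  rw [← Algebra.algebraMap_eq_smul_one]; exact Ring.inverse_mul_cancel _ hs

theorem smul_one_sub_mul_resolvent {s : ℂ} (hs : s ∈ resolventSet ℂ A) :
    (s • 1 - A) * resolvent A s = 1 := by
  rw [← Algebra.algebraMap_eq_smul_one]; exact Ring.mul_inverse_cancel _ hs

theorem resolvent_mul_self {s : ℂ} (hs : s ∈ resolventSet ℂ A) :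
    resolvent A s * A = s • resolvent A s - 1 := by
  rw [← resolvent_mul_smul_one_sub hs, Matrix.mul_sub]; simp

theorem self_mul_resolvent {s : ℂ} (hs : s ∈ resolventSet ℂ A) :
    A * resolvent A s = s • resolvent A s - 1 := by
  rw [← smul_one_sub_mul_resolvent hs, Matrix.sub_mul]; simp

theorem neg_lyapunov_eq (A Y : Matrix n n ℂ) (ω : ℝ) :
    -(A * Y + Y * Aᴴ) = ((Complex.I * ω) • 1 - A) * Y + Y * ((Complex.I * ω) • 1 - A)ᴴ := by
  simp [Matrix.sub_mul, Matrix.mul_sub]; abel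

theorem resolvent_mul_add_mul_conjTranspose_resolvent (Y : Matrix n n ℂ) {ω : ℝ}
    (hω : Complex.I * ω ∈ resolventSet ℂ A) :
    resolvent A (Complex.I * ω) * Y + Y * (resolvent A (Complex.I * ω))ᴴ =
      resolvent A (Complex.I * ω) * -(A * Y + Y * Aᴴ) * (resolvent A (Complex.I * ω))ᴴ := by
  have right_inv : ((Complex.I * ω) • 1 - A)ᴴ * (resolvent A (Complex.I * ω))ᴴ = 1 := by
    rw [← conjTranspose_mul, resolvent_mul_smul_one_sub hω, conjTranspose_one]
  rw [neg_lyapunov_eq A Y ω, Matrix.mul_add, Matrix.add_mul, ← Matrix.mul_assoc,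
    resolvent_mul_smul_one_sub hω, Matrix.one_mul, Matrix.mul_assoc, Matrix.mul_assoc Y, right_inv,
    Matrix.mul_one, add_comm]

open scoped Matrix.Norms.L2Operator in
theorem posSemidef_of_posSemidef_neg_lyapunov (hA : ∀ μ ∈ spectrum ℂ A, μ.re < 0)
    (hY : Y.IsHermitian) (hAY : (-(A * Y + Y * Aᴴ)).PosSemidef) : Y.PosSemidef := by
  refine .of_dotProduct_mulVec_nonneg hY fun x => ?_
  let ℓ : StrongDual ℂ (Matrix n n ℂ) := LinearMap.toContinuousLinearMap
    { toFun := fun M => star x ⬝ᵥ ((M * Y) *ᵥ x)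
      map_add' := fun M N => by rw [Matrix.add_mul, add_mulVec, dotProduct_add]
      map_smul' := fun c M => by simp [smul_mulVec] }
  have resolvent_nonneg (ω : ℝ) : 0 ≤ (ℓ (resolvent A (Complex.I * ω))).re := by
    have hω := mem_resolventSet_of_re_nonneg hA (s := Complex.I * ω) (by simp)
    set Φ := resolvent A (Complex.I * ω)
    have adjoint_eq : Y * Φᴴ = (Φ * Y)ᴴ := by rw [conjTranspose_mul, hY.eq]
    have := (hAY.mul_mul_conjTranspose_same Φ).dotProduct_mulVec_nonneg x
    rw [← resolvent_mul_add_mul_conjTranspose_resolvent Y hω, add_mulVec, dotProduct_add,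
      Complex.nonneg_iff, Complex.add_re, adjoint_eq,
      re_star_dotProduct_conjTranspose_mulVec] at this
    change 0 ≤ (star x ⬝ᵥ ((Φ * Y) *ᵥ x)).re
    linarith [this.1]
  have one_nonneg : 0 ≤ (star x ⬝ᵥ ((1 * Y) *ᵥ x)).re := re_apply_one_nonneg hA ℓ resolvent_nonneg
  rw [Matrix.one_mul] at one_nonneg
  exact Complex.nonneg_iff.2 ⟨one_nonneg, (hY.im_star_dotProduct_mulVec_self x).symm⟩

end Lyapunov

/-- Observability of the pair `(A, C)`: an initial state whose output and all its derivatives vanish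
is zero. Controllability of `(A, B)` is observability of `(Aᴴ, Bᴴ)`. -/
def IsObservable {n m : Type*} [Fintype n] [DecidableEq n] (A : Matrix n n ℂ)
    (C : Matrix m n ℂ) : Prop :=
  ∀ v, (∀ k : ℕ, (C * A ^ k) *ᵥ v = 0) → v = 0

section Observability

variable {n m : Type*} [Fintype n] [DecidableEq n] {A Y : Matrix n n ℂ}

theorem mulVec_conjTranspose_pow_mulVec_eq_zero (hY : Y.IsHermitian)
    (hAY : (-(A * Y + Y * Aᴴ)).PosSemidef) {v : n → ℂ} (hv : Y *ᵥ v = 0) (k : ℕ) :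
    Y *ᵥ (Aᴴ ^ k *ᵥ v) = 0 := by
  induction k with
  | zero => simpa using hv
  | succ k ih =>
    set x := Aᴴ ^ k *ᵥ v with hx
    have lyapunov_mulVec : -(A * Y + Y * Aᴴ) *ᵥ x = -(Y *ᵥ (Aᴴ *ᵥ x)) := by
      rw [neg_mulVec, add_mulVec, ← mulVec_mulVec, ih, mulVec_zero, zero_add, ← mulVec_mulVec]
    have form_eq_zero : star x ⬝ᵥ (-(A * Y + Y * Aᴴ) *ᵥ x) = 0 := by
      rw [lyapunov_mulVec, dotProduct_neg, dotProduct_mulVec, ← hY.eq, ← star_mulVec, ih,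
        star_zero, zero_dotProduct, neg_zero]
    rw [hAY.dotProduct_mulVec_zero_iff, lyapunov_mulVec, neg_eq_zero] at form_eq_zero
    rw [pow_succ', ← mulVec_mulVec, ← hx, form_eq_zero]

theorem IsObservable.eq_zero_of_mul_conjTranspose_eq_zero {C : Matrix m n ℂ}
    (hAC : IsObservable A C) (hY : Y.IsHermitian) (hAY : (-(A * Y + Y * Aᴴ)).PosSemidef)
    (hYC : Y * Cᴴ = 0) : Y = 0 := by
  have hYAC (k : ℕ) : Y * (Aᴴ ^ k * Cᴴ) = 0 := by
    ext i j
    exact congrFun (mulVec_conjTranspose_pow_mulVec_eq_zero hY hAY (v := Cᴴ.col j)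
      (funext fun i => congrFun₂ hYC i j) k) i
  have hCAY (k : ℕ) : C * A ^ k * Y = 0 := by
    rw [← conjTranspose_eq_zero, conjTranspose_mul, conjTranspose_mul, hY.eq, conjTranspose_pow,
      hYAC]
  ext i j
  exact congrFun (hAC (Y.col j) fun k => funext fun i => congrFun₂ (hCAY k) i j) i

theorem posDef_of_posSemidef_neg_lyapunov {B : Matrix n m ℂ} {C : Matrix m n ℂ}
    (hA : ∀ μ ∈ spectrum ℂ A, μ.re < 0) (hAB : IsObservable Aᴴ Bᴴ) (hY : Y.IsHermitian)
    (hAY : (-(A * Y + Y * Aᴴ)).PosSemidef) (hBC : B + A * Y * Cᴴ = 0) : Y.PosDef := by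
  have Y_posSemidef := posSemidef_of_posSemidef_neg_lyapunov hA hY hAY
  have B_conjTranspose : Bᴴ = -(C * Y * Aᴴ) := by
    rw [eq_neg_of_add_eq_zero_left hBC, conjTranspose_neg, conjTranspose_mul, conjTranspose_mul,
      conjTranspose_conjTranspose, hY.eq, Matrix.mul_assoc]
  refine .of_dotProduct_mulVec_pos hY fun v hv =>
    (Y_posSemidef.dotProduct_mulVec_nonneg v).lt_of_ne' fun h => hv (hAB v fun k => ?_)
  have := mulVec_conjTranspose_pow_mulVec_eq_zero hY hAY
    ((Y_posSemidef.dotProduct_mulVec_zero_iff v).1 h) (k + 1)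
  rw [B_conjTranspose, Matrix.neg_mul, Matrix.mul_assoc, ← pow_succ', Matrix.mul_assoc,
    neg_mulVec, ← mulVec_mulVec, ← mulVec_mulVec, this, mulVec_zero, neg_zero]

end Observability

theorem posSemidef_and_eq_zero_of_posSemidef_fromBlocks {m n : Type*} [Finite m] [Finite n]
    {P : Matrix m m ℂ} {R : Matrix m n ℂ} {S : Matrix n m ℂ}
    (h : (fromBlocks P R S 0).PosSemidef) : P.PosSemidef ∧ R = 0 := by
  classical
  cases nonempty_fintype m
  cases nonempty_fintype n
  refine ⟨h.submatrix Sum.inl, ext fun i j => ?_⟩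
  have := (h.dotProduct_mulVec_zero_iff (Sum.elim 0 (Pi.single j 1))).1 (by simp)
  simpa [fromBlocks] using congrFun this (Sum.inl i)

/-- The strictly proper transfer function `C (s I - A)⁻¹ B`. -/
noncomputable def transfer {n m l : Type*} [Fintype n] [DecidableEq n] (A : Matrix n n ℂ)
    (B : Matrix n m ℂ) (C : Matrix l n ℂ) (s : ℂ) : Matrix l m ℂ :=
  C * resolvent A s * B

theorem tendsto_I_mul_ofReal_cobounded :
    Tendsto (fun ω : ℝ => Complex.I * ω) atTop (Bornology.cobounded ℂ) :=
  (tendsto_mul_left_cobounded Complex.I_ne_zero).comp (RCLike.tendsto_ofReal_atTop_cobounded ℂ)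

section Transfer

variable {n m : Type*} [Fintype n] [DecidableEq n] {A : Matrix n n ℂ}
  {B : Matrix n m ℂ} {C : Matrix m n ℂ}

open scoped Matrix.Norms.L2Operator in
theorem tendsto_smul_transfer_cobounded {l : Type*} (A : Matrix n n ℂ) (B : Matrix n m ℂ)
    (C : Matrix l n ℂ) :
    Tendsto (fun s => s • transfer A B C s) (Bornology.cobounded ℂ) (𝓝 (C * B)) := by
  have mul_continuous : Continuous fun X : Matrix n n ℂ => C * X * B := by fun_prop
  simpa [transfer, Function.comp_def] using
    (mul_continuous.tendsto 1).comp (tendsto_smul_resolvent_cobounded (𝕜 := ℂ) A)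

theorem pencilLyapunov_fromCols (A Y : Matrix n n ℂ) (C : Matrix m n ℂ) :
    pencilLyapunov (fromCols Aᴴ 0) (fromCols 1 Cᴴ) Y =
      fromBlocks (A * Y + Y * Aᴴ) (A * Y * Cᴴ) (C * Y * Aᴴ) 0 := by
  rw [pencilLyapunov_apply]
  ext (i | i) (j | j) <;>
    simp [conjTranspose_fromCols_eq_fromRows_conjTranspose, fromRows_mul, mul_fromCols]

variable [Fintype m]

theorem re_star_dotProduct_mul_nonneg
    (h : ∀ (ω : ℝ) u, 0 ≤ (star u ⬝ᵥ (((Complex.I * ω) • transfer A B C (Complex.I * ω)) *ᵥ u)).re)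
    (u : m → ℂ) : 0 ≤ (star u ⬝ᵥ ((C * B) *ᵥ u)).re := by
  have form_continuous : Continuous fun M : Matrix m m ℂ => (star u ⬝ᵥ (M *ᵥ u)).re := by fun_prop
  exact ge_of_tendsto' ((form_continuous.tendsto _).comp
    ((tendsto_smul_transfer_cobounded A B C).comp tendsto_I_mul_ofReal_cobounded)) fun ω => h ω u

theorem star_dotProduct_mulVec_eq_of_resolvent {ω : ℝ} {x : n → ℂ} {u : m → ℂ}
    (hω : Complex.I * ω ∈ resolventSet ℂ A)
    (hx : Aᴴ *ᵥ x = -(Complex.I * ω) • (x + Cᴴ *ᵥ u)) :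
    star x ⬝ᵥ (B *ᵥ u) =
      -(star u ⬝ᵥ (((Complex.I * ω) • transfer A B C (Complex.I * ω)) *ᵥ u)) := by
  set Φ := resolvent A (Complex.I * ω) with hΦ
  have left_inv : Φᴴ * ((Complex.I * ω) • 1 - A)ᴴ = 1 := by
    rw [← conjTranspose_mul, smul_one_sub_mul_resolvent hω, conjTranspose_one]
  have mulVec_x : ((Complex.I * ω) • 1 - A)ᴴ *ᵥ x = (Complex.I * ω) • (Cᴴ *ᵥ u) := by
    simp [sub_mulVec, hx, smul_add, neg_mulVec, smul_mulVec]
  have x_eq : x = (Complex.I * ω) • ((C * Φ)ᴴ *ᵥ u) := by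
    rw [conjTranspose_mul, ← mulVec_mulVec, ← mulVec_smul, ← mulVec_x, mulVec_mulVec, left_inv,
      one_mulVec]
  rw [x_eq, star_smul, star_mulVec, conjTranspose_conjTranspose, smul_dotProduct,
    ← dotProduct_mulVec, mulVec_mulVec, smul_mulVec, dotProduct_smul]
  simp [transfer, ← hΦ]

theorem re_star_dotProduct_fromBlocks_mulVec_nonpos (hA : ∀ μ ∈ spectrum ℂ A, μ.re < 0)
    (h : ∀ (ω : ℝ) u, 0 ≤ (star u ⬝ᵥ (((Complex.I * ω) • transfer A B C (Complex.I * ω)) *ᵥ u)).re)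
    {v : n ⊕ m → ℂ} (hv : IsImaginaryEigenvector (fromCols Aᴴ 0) (fromCols 1 Cᴴ) v) :
    (star v ⬝ᵥ (fromBlocks 0 B Bᴴ 0 *ᵥ v)).re ≤ 0 := by
  obtain ⟨x, u, rfl⟩ : ∃ x u, v = Sum.elim x u := ⟨_, _, (Sum.elim_comp_inl_inr v).symm⟩
  suffices (star x ⬝ᵥ (B *ᵥ u)).re ≤ 0 by
    simpa [fromBlocks_mulVec, Function.star_sumElim, re_star_dotProduct_conjTranspose_mulVec]
  simp only [IsImaginaryEigenvector, fromCols_mulVec, Sum.elim_comp_inl, Sum.elim_comp_inr,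
    one_mulVec, zero_mulVec, add_zero] at hv
  rcases hv with hx | ⟨ω, hx⟩
  · have : star x ⬝ᵥ (B *ᵥ u) = -(star u ⬝ᵥ ((C * B) *ᵥ u)) := by
      rw [eq_neg_of_add_eq_zero_left hx, star_neg, star_mulVec, conjTranspose_conjTranspose,
        neg_dotProduct, ← dotProduct_mulVec, mulVec_mulVec]
    rw [this, Complex.neg_re, neg_nonpos]
    exact re_star_dotProduct_mul_nonneg h u
  · have := star_dotProduct_mulVec_eq_of_resolvent (B := B) (ω := -ω)
      (mem_resolventSet_of_re_nonneg hA (by simp)) (by simpa using hx)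
    rw [this, Complex.neg_re, neg_nonpos]
    exact h _ u

theorem exists_isHermitian_posSemidef_neg_lyapunov (hA : ∀ μ ∈ spectrum ℂ A, μ.re < 0)
    (hAC : IsObservable A C)
    (h : ∀ (ω : ℝ) u,
      0 ≤ (star u ⬝ᵥ (((Complex.I * ω) • transfer A B C (Complex.I * ω)) *ᵥ u)).re) :
    ∃ Y, Y.IsHermitian ∧ (-(A * Y + Y * Aᴴ)).PosSemidef ∧ B + A * Y * Cᴴ = 0 := by
  obtain ⟨A', hA'⟩ := (isUnit_of_forall_re_neg hA).exists_left_inv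
  have Y_eq_zero (Y : Matrix n n ℂ) (hY : Y.IsHermitian)
      (h : (-pencilLyapunov (fromCols Aᴴ 0) (fromCols 1 Cᴴ) Y).PosSemidef) : Y = 0 := by
    rw [pencilLyapunov_fromCols, fromBlocks_neg, neg_zero] at h
    obtain ⟨hAY, hAYC⟩ := posSemidef_and_eq_zero_of_posSemidef_fromBlocks h
    have Y_mul : Y * Cᴴ = 0 := by
      rw [← Matrix.one_mul (Y * Cᴴ), ← hA', Matrix.mul_assoc, ← Matrix.mul_assoc A,
        neg_eq_zero.1 hAYC, Matrix.mul_zero]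
    exact hAC.eq_zero_of_mul_conjTranspose_eq_zero hY hAY Y_mul
  obtain ⟨Y, hY, hNY⟩ := exists_posSemidef_neg_add_pencilLyapunov
    (N := fromBlocks 0 B Bᴴ 0) (by simp [IsHermitian, fromBlocks_conjTranspose]) Y_eq_zero
    (fun v hv => re_star_dotProduct_fromBlocks_mulVec_nonpos hA h hv)
  rw [pencilLyapunov_fromCols, fromBlocks_add, fromBlocks_neg, zero_add, zero_add, neg_zero] at hNY
  obtain ⟨hAY, hBC⟩ := posSemidef_and_eq_zero_of_posSemidef_fromBlocks hNY
  exact ⟨Y, hY, hAY, neg_eq_zero.1 hBC⟩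

end Transfer

section StrictlyNegativeImaginary

variable {n m : Type*} [Fintype n] [DecidableEq n] {A Y L : Matrix n n ℂ}
  {B : Matrix n m ℂ} {C : Matrix m n ℂ} {ω : ℝ}

theorem I_smul_transfer_sub_conjTranspose (hω : Complex.I * ω ∈ resolventSet ℂ A)
    (hY : Y.IsHermitian) (hBC : B + A * Y * Cᴴ = 0) :
    Complex.I • (transfer A B C (Complex.I * ω) - (transfer A B C (Complex.I * ω))ᴴ) =
      (ω : ℂ) • (C * (resolvent A (Complex.I * ω) * Y + Y * (resolvent A (Complex.I * ω))ᴴ) *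
        Cᴴ) := by
  have transfer_eq : transfer A B C (Complex.I * ω) =
      C * Y * Cᴴ - (Complex.I * ω) • (C * resolvent A (Complex.I * ω) * Y * Cᴴ) := by
    rw [transfer, eq_neg_of_add_eq_zero_left hBC, Matrix.mul_neg, ← Matrix.mul_assoc,
      ← Matrix.mul_assoc, Matrix.mul_assoc C, resolvent_mul_self hω]
    simp [Matrix.mul_sub, Matrix.sub_mul]
  rw [transfer_eq]
  simp [hY.eq, Matrix.mul_add, Matrix.add_mul, Matrix.mul_assoc, smul_smul, ← mul_assoc, smul_sub]

theorem conjTranspose_mul_self_eq_of_lyapunov (hA : IsUnit A) (hY_unit : IsUnit Y)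
    (hω : Complex.I * ω ∈ resolventSet ℂ A) (hY : Y.IsHermitian)
    (hL : Lᴴ * L = -(A * Y + Y * Aᴴ)) (hBC : B + A * Y * Cᴴ = 0) :
    (L * Y⁻¹ * A⁻¹ * resolvent A (Complex.I * ω) * B)ᴴ *
        (L * Y⁻¹ * A⁻¹ * resolvent A (Complex.I * ω) * B) =
      C * (resolvent A (Complex.I * ω) * Y + Y * (resolvent A (Complex.I * ω))ᴴ) * Cᴴ := by
  rw [isUnit_iff_isUnit_det] at hA hY_unit
  set Φ := resolvent A (Complex.I * ω)
  set W := (Complex.I * ω) • (1 : Matrix n n ℂ) - A with hW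
  set V := Y⁻¹ * (Φ * (Y * Cᴴ)) with hV
  have Y_mul_V : Y * V = Φ * (Y * Cᴴ) := mul_nonsing_inv_cancel_left _ _ hY_unit
  have W_mul_Y_mul_V : W * (Y * V) = Y * Cᴴ := by
    rw [Y_mul_V, ← Matrix.mul_assoc, smul_one_sub_mul_resolvent hω, Matrix.one_mul]
  have factor_eq : L * Y⁻¹ * A⁻¹ * Φ * B = -(L * V) := by
    have Φ_mul_A : Φ * A = A * Φ := by rw [resolvent_mul_self hω, self_mul_resolvent hω]
    rw [eq_neg_of_add_eq_zero_left hBC, Matrix.mul_neg, hV, ← Matrix.mul_assoc, ← Matrix.mul_assoc,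
      Matrix.mul_assoc _ Φ A, Φ_mul_A]
    simp only [Matrix.mul_assoc, nonsing_inv_mul_cancel_left _ _ hA]
  calc _ = Vᴴ * (Lᴴ * L) * V := by
        rw [factor_eq, conjTranspose_neg, Matrix.neg_mul, Matrix.mul_neg, neg_neg,
          conjTranspose_mul]
        simp only [Matrix.mul_assoc]
    _ = Vᴴ * (W * (Y * V)) + (W * (Y * V))ᴴ * V := by
        rw [hL, neg_lyapunov_eq A Y ω, ← hW]
        simp only [Matrix.mul_add, Matrix.add_mul, conjTranspose_mul, hY.eq, Matrix.mul_assoc]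
    _ = (Y * V)ᴴ * Cᴴ + C * (Y * V) := by
        simp only [W_mul_Y_mul_V, conjTranspose_mul, conjTranspose_conjTranspose, hY.eq,
          Matrix.mul_assoc]
    _ = C * (Φ * Y + Y * Φᴴ) * Cᴴ := by
        rw [Y_mul_V]
        simp [Matrix.add_mul, Matrix.mul_add, Matrix.mul_assoc, hY.eq, add_comm]

theorem I_smul_transfer_sub_conjTranspose_eq_smul_conjTranspose_mul_self (hA : IsUnit A)
    (hY_unit : IsUnit Y) (hω : Complex.I * ω ∈ resolventSet ℂ A) (hY : Y.IsHermitian)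
    (hL : Lᴴ * L = -(A * Y + Y * Aᴴ)) (hBC : B + A * Y * Cᴴ = 0) :
    Complex.I • (transfer A B C (Complex.I * ω) - (transfer A B C (Complex.I * ω))ᴴ) =
      (ω : ℂ) • ((L * Y⁻¹ * A⁻¹ * resolvent A (Complex.I * ω) * B)ᴴ *
        (L * Y⁻¹ * A⁻¹ * resolvent A (Complex.I * ω) * B)) := by
  rw [conjTranspose_mul_self_eq_of_lyapunov hA hY_unit hω hY hL hBC,
    I_smul_transfer_sub_conjTranspose hω hY hBC]

end StrictlyNegativeImaginary

section FullColumnRank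

variable {m n : Type*} [Fintype n]

theorem rank_eq_card_iff_linearIndependent_col {K : Type*} [Field K] (M : Matrix m n K) :
    M.rank = Fintype.card n ↔ LinearIndependent K M.col := by
  rw [rank_eq_finrank_span_cols, eq_comm]
  exact linearIndependent_iff_card_eq_finrank_span.symm

theorem rank_map_algebraMap_eq_card_iff [Finite m] {K L : Type*} [Field K] [Field L] [Algebra K L]
    (M : Matrix m n K) : (M.map (algebraMap K L)).rank = Fintype.card n ↔
      M.rank = Fintype.card n := by
  rw [rank_eq_card_iff_linearIndependent_col, rank_eq_card_iff_linearIndependent_col]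
  exact linearIndependent_algebraMap_comp_iff

theorem posDef_smul_conjTranspose_mul_self_iff [Fintype m] {c : ℂ} (hc : 0 < c) (M : Matrix m n ℂ) :
    (c • (Mᴴ * M)).PosDef ↔ M.rank = Fintype.card n := by
  classical
  refine ⟨fun h => ?_, fun h => ?_⟩
  · have gram_isUnit : IsUnit (Mᴴ * M) := by
      simpa [smul_smul, hc.ne'] using (h.smul (inv_pos.2 hc)).isUnit
    rw [← rank_conjTranspose_mul_self, rank_of_isUnit _ gram_isUnit]
  · rw [rank_eq_card_iff_linearIndependent_col, ← mulVec_injective_iff] at h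
    exact (PosDef.conjTranspose_mul_self M h).smul hc

end FullColumnRank

section RealMatrices

variable {l m n : Type*}

theorem map_nonsing_inv {K L : Type*} [Field K] [Field L] [Fintype n] [DecidableEq n] (f : K →+* L)
    (M : Matrix n n K) : M⁻¹.map f = (M.map f)⁻¹ := by
  have map_adjugate : M.adjugate.map f = (M.map f).adjugate := f.map_adjugate M
  have map_det : f M.det = (M.map f).det := f.map_det M
  rw [inv_def, inv_def, ← map_adjugate, ← map_det]
  ext i j
  simp

theorem map_ofReal_mul [Fintype m] (M : Matrix l m ℝ) (N : Matrix m n ℝ) :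
    (M * N).map Complex.ofReal = M.map Complex.ofReal * N.map Complex.ofReal :=
  Matrix.map_mul (f := Complex.ofRealHom)

theorem map_ofReal_pow [Fintype n] [DecidableEq n] (M : Matrix n n ℝ) (k : ℕ) :
    (M ^ k).map Complex.ofReal = M.map Complex.ofReal ^ k :=
  map_pow Complex.ofRealHom.mapMatrix M k

theorem map_ofReal_inv [Fintype n] [DecidableEq n] (M : Matrix n n ℝ) :
    M⁻¹.map Complex.ofReal = (M.map Complex.ofReal)⁻¹ :=
  map_nonsing_inv Complex.ofRealHom M

theorem conjTranspose_map_ofReal (M : Matrix m n ℝ) :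
    (M.map Complex.ofReal)ᴴ = Mᵀ.map Complex.ofReal := by
  ext i j
  simp

theorem map_re_map_ofReal_mul [Fintype m] (M : Matrix l m ℝ) (Z : Matrix m n ℂ) :
    (M.map Complex.ofReal * Z).map Complex.re = M * Z.map Complex.re := by
  ext i j
  simp [mul_apply]

theorem map_re_mul_map_ofReal [Fintype m] (Z : Matrix l m ℂ) (M : Matrix m n ℝ) :
    (Z * M.map Complex.ofReal).map Complex.re = Z.map Complex.re * M := by
  ext i j
  simp [mul_apply]

theorem re_star_ofReal_dotProduct_mulVec [Fintype m] (Z : Matrix m m ℂ) (x : m → ℝ) :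
    (star (Complex.ofReal ∘ x) ⬝ᵥ (Z *ᵥ (Complex.ofReal ∘ x))).re =
      star x ⬝ᵥ (Z.map Complex.re *ᵥ x) := by
  simp [dotProduct, mulVec]

theorem isHermitian_map_re {Z : Matrix m m ℂ} (hZ : Z.IsHermitian) :
    (Z.map Complex.re).IsHermitian := by
  ext i j
  simp [← hZ.apply i j]

theorem posSemidef_map_re [Finite m] {Z : Matrix m m ℂ} (hZ : Z.PosSemidef) :
    (Z.map Complex.re).PosSemidef := by
  cases nonempty_fintype m
  refine .of_dotProduct_mulVec_nonneg (isHermitian_map_re hZ.1) fun x => ?_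
  rw [← re_star_ofReal_dotProduct_mulVec]
  exact hZ.re_dotProduct_nonneg _

theorem posDef_map_re [Finite m] {Z : Matrix m m ℂ} (hZ : Z.PosDef) :
    (Z.map Complex.re).PosDef := by
  cases nonempty_fintype m
  refine .of_dotProduct_mulVec_pos (isHermitian_map_re hZ.1) fun x hx => ?_
  rw [← re_star_ofReal_dotProduct_mulVec]
  refine hZ.re_dotProduct_pos fun h => hx (funext fun i => ?_)
  exact Complex.ofReal_eq_zero.1 (congrFun h i)

open scoped MatrixOrder in
theorem eq_transpose_of_posSemidef_I_smul_sub {D : Matrix m m ℝ}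
    (hD : (Complex.I • (D.map Complex.ofReal - (D.map Complex.ofReal)ᴴ)).PosSemidef) :
    D = Dᵀ := by
  set K := Complex.I • (D.map Complex.ofReal - (D.map Complex.ofReal)ᴴ) with hK
  have transpose_eq_neg : Kᵀ = -K := by
    ext i j
    simp [hK, ← mul_neg]
  have K_eq_zero : K = 0 :=
    le_antisymm (neg_nonneg.1 (transpose_eq_neg ▸ hD.transpose).nonneg) hD.nonneg
  ext i j
  simpa [hK, sub_eq_zero] using congrFun₂ K_eq_zero i j

open scoped MatrixOrder Matrix.Norms.L2Operator in
theorem exists_transpose_mul_self_eq [Fintype m] {P : Matrix m m ℝ}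
    (hP : P.PosSemidef) : ∃ L : Matrix m m ℝ, Lᵀ * L = P := by
  classical
  obtain ⟨L, hL⟩ := CStarAlgebra.nonneg_iff_eq_star_mul_self.1 hP.nonneg
  exact ⟨L, by simpa [star_eq_conjTranspose] using hL.symm⟩

theorem isObservable_map_ofReal_of_rank_eq {n m : ℕ} {A : Matrix (Fin n) (Fin n) ℝ}
    {C : Matrix (Fin m) (Fin n) ℝ}
    (h : (of fun (p : Fin n × Fin m) i => (C * A ^ (p.1 : ℕ)) p.2 i).rank = n) :
    IsObservable (A.map Complex.ofReal) (C.map Complex.ofReal) := by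
  intro v hv
  replace h := h.trans (Fintype.card_fin n).symm
  rw [← rank_map_algebraMap_eq_card_iff (L := ℂ), rank_eq_card_iff_linearIndependent_col,
    ← mulVec_injective_iff] at h
  refine h (Eq.trans (funext fun p => ?_) (mulVec_zero _).symm)
  have := congrFun (hv p.1) p.2
  rwa [← map_ofReal_pow, ← map_ofReal_mul] at this

theorem rank_le_rank_of_add_mul_transpose_eq_zero [Fintype m] [Fintype n] {B : Matrix l m ℝ}
    {C : Matrix m n ℝ} {P : Matrix l n ℝ} (h : B + P * Cᵀ = 0) :
    B.rank ≤ C.rank := by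
  rw [eq_neg_of_add_eq_zero_left h, ← Matrix.neg_mul, ← rank_transpose C]
  exact rank_mul_le_right _ _

theorem rank_eq_card_of_rank_mul_map_ofReal_eq_card [Fintype l] [Fintype m] {k : Type*}
    {P : Matrix k l ℂ} {B : Matrix l m ℝ}
    (h : (P * B.map Complex.ofReal).rank = Fintype.card m) : B.rank = Fintype.card m :=
  (rank_map_algebraMap_eq_card_iff (L := ℂ) B).1 <|
    (rank_le_card_width _).antisymm (h.symm.trans_le (rank_mul_le_right P _))

theorem map_conj_map_ofReal (M : Matrix l m ℝ) :
    (M.map Complex.ofReal).map (starRingEnd ℂ) = M.map Complex.ofReal := by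
  ext i j
  simp

theorem resolvent_eq_nonsing_inv [Fintype n] [DecidableEq n] (A : Matrix n n ℂ) (s : ℂ) :
    resolvent A s = (s • 1 - A)⁻¹ := by
  rw [nonsing_inv_eq_ringInverse, resolvent, Algebra.algebraMap_eq_smul_one]

theorem transfer_map_ofReal_conj [Fintype n] [DecidableEq n] (A : Matrix n n ℝ) (B : Matrix n m ℝ)
    (C : Matrix l n ℝ) (s : ℂ) :
    transfer (A.map Complex.ofReal) (B.map Complex.ofReal) (C.map Complex.ofReal)
        (starRingEnd ℂ s) =
      (transfer (A.map Complex.ofReal) (B.map Complex.ofReal) (C.map Complex.ofReal) s).map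
        (starRingEnd ℂ) := by
  have pencil_conj : (s • (1 : Matrix n n ℂ) - A.map Complex.ofReal).map (starRingEnd ℂ) =
      starRingEnd ℂ s • 1 - A.map Complex.ofReal := by
    ext i j
    simp [one_apply, apply_ite (starRingEnd ℂ)]
  rw [transfer, transfer, Matrix.map_mul, Matrix.map_mul, map_conj_map_ofReal, map_conj_map_ofReal,
    resolvent_eq_nonsing_inv, resolvent_eq_nonsing_inv, map_nonsing_inv, pencil_conj]

end RealMatrices

section RealSystems

variable {n m : ℕ} {A Y L : Matrix (Fin n) (Fin n) ℝ} {B : Matrix (Fin n) (Fin m) ℝ}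
  {C : Matrix (Fin m) (Fin n) ℝ} {D : Matrix (Fin m) (Fin m) ℝ} {ω : ℝ}

theorem IsMinimal.isObservable (hmin : IsMinimal A B C) :
    IsObservable (A.map Complex.ofReal) (C.map Complex.ofReal) :=
  isObservable_map_ofReal_of_rank_eq hmin.2

theorem IsMinimal.isObservable_conjTranspose (hmin : IsMinimal A B C) :
    IsObservable (A.map Complex.ofReal)ᴴ (B.map Complex.ofReal)ᴴ := by
  rw [conjTranspose_map_ofReal, conjTranspose_map_ofReal]
  apply isObservable_map_ofReal_of_rank_eq
  refine Eq.trans ?_ hmin.1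
  rw [← rank_transpose]
  congr 1
  ext i p
  simp [← transpose_pow, ← transpose_mul]

theorem tf_eq_transfer_add (A : Matrix (Fin n) (Fin n) ℝ) (B : Matrix (Fin n) (Fin m) ℝ)
    (C : Matrix (Fin m) (Fin n) ℝ) (D : Matrix (Fin m) (Fin m) ℝ) (s : ℂ) :
    tf A B C D s =
      transfer (A.map Complex.ofReal) (B.map Complex.ofReal) (C.map Complex.ofReal) s +
        D.map Complex.ofReal := by
  rw [tf, transfer, resolvent_eq_nonsing_inv]

theorem tf_sub_conjTranspose (hD : D = Dᵀ) (s : ℂ) :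
    tf A B C D s - (tf A B C D s)ᴴ =
      transfer (A.map Complex.ofReal) (B.map Complex.ofReal) (C.map Complex.ofReal) s -
        (transfer (A.map Complex.ofReal) (B.map Complex.ofReal) (C.map Complex.ofReal) s)ᴴ := by
  rw [tf_eq_transfer_add, conjTranspose_add, conjTranspose_map_ofReal D, ← hD,
    add_sub_add_right_eq_sub]

open scoped Matrix.Norms.L2Operator in
theorem tendsto_tf_cobounded (A : Matrix (Fin n) (Fin n) ℝ) (B : Matrix (Fin n) (Fin m) ℝ)
    (C : Matrix (Fin m) (Fin n) ℝ) (D : Matrix (Fin m) (Fin m) ℝ) :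
    Tendsto (tf A B C D) (Bornology.cobounded ℂ) (𝓝 (D.map Complex.ofReal)) := by
  have form_continuous : Continuous fun X : Matrix (Fin n) (Fin n) ℂ =>
      C.map Complex.ofReal * X * B.map Complex.ofReal + D.map Complex.ofReal := by fun_prop
  have := (form_continuous.tendsto 0).comp
    (spectrum.resolvent_tendsto_cobounded (𝕜 := ℂ) (A.map Complex.ofReal))
  rw [Matrix.mul_zero, Matrix.zero_mul, zero_add] at this
  exact this.congr fun s => (tf_eq_transfer_add A B C D s).symm

open scoped Matrix.Norms.L2Operator MatrixOrder in
theorem IsSNI.eq_transpose (h : IsSNI A B C D) : D = Dᵀ := by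
  refine eq_transpose_of_posSemidef_I_smul_sub (nonneg_iff_posSemidef.1 ?_)
  have form_continuous : Continuous fun R : Matrix (Fin m) (Fin m) ℂ => Complex.I • (R - Rᴴ) := by
    fun_prop
  refine ge_of_tendsto ((form_continuous.tendsto _).comp
    ((tendsto_tf_cobounded A B C D).comp tendsto_I_mul_ofReal_cobounded)) ?_
  filter_upwards [eventually_gt_atTop 0] with ω hω
  exact (h.2 ω hω).posSemidef.nonneg

theorem IsSNI.re_star_dotProduct_transfer_nonneg_of_pos (h : IsSNI A B C D) (hω : 0 < ω)
    (u : Fin m → ℂ) :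
    0 ≤ (star u ⬝ᵥ (((Complex.I * ω) • transfer (A.map Complex.ofReal) (B.map Complex.ofReal)
      (C.map Complex.ofReal) (Complex.I * ω)) *ᵥ u)).re := by
  set H := transfer (A.map Complex.ofReal) (B.map Complex.ofReal) (C.map Complex.ofReal)
    (Complex.I * ω) with hH
  have split : Complex.I • (H - Hᴴ) = Complex.I • H + (Complex.I • H)ᴴ := by
    simp [sub_eq_add_neg]
  have form_nonneg := (h.2 ω hω).posSemidef.re_dotProduct_nonneg u
  rw [tf_sub_conjTranspose h.eq_transpose, ← hH, split, add_mulVec, dotProduct_add, map_add,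
    RCLike.re_to_complex, RCLike.re_to_complex, re_star_dotProduct_conjTranspose_mulVec,
    ← two_mul] at form_nonneg
  rw [mul_comm, mul_smul, smul_mulVec, dotProduct_smul, smul_eq_mul, Complex.re_ofReal_mul]
  exact mul_nonneg hω.le (by linarith)

theorem IsSNI.re_star_dotProduct_transfer_nonneg (h : IsSNI A B C D) (ω : ℝ) (u : Fin m → ℂ) :
    0 ≤ (star u ⬝ᵥ (((Complex.I * ω) • transfer (A.map Complex.ofReal) (B.map Complex.ofReal)
      (C.map Complex.ofReal) (Complex.I * ω)) *ᵥ u)).re := by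
  rcases lt_trichotomy ω 0 with hω | rfl | hω
  · have conj_eq : Complex.I * ω = starRingEnd ℂ (Complex.I * (-ω : ℝ)) := by simp
    have := h.re_star_dotProduct_transfer_nonneg_of_pos (neg_pos.2 hω) (star u)
    rw [← Complex.conj_re] at this
    convert this using 2
    rw [conj_eq, transfer_map_ofReal_conj]
    simp [dotProduct, mulVec]
  · simp
  · exact h.re_star_dotProduct_transfer_nonneg_of_pos hω u

theorem IsSNI.exists_posDef_lyapunov (hmin : IsMinimal A B C) (h : IsSNI A B C D) :
    ∃ Y : Matrix (Fin n) (Fin n) ℝ, Y.PosDef ∧ (-(A * Y + Y * Aᵀ)).PosSemidef ∧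
      B + A * Y * Cᵀ = 0 := by
  obtain ⟨Z, hZ, hAZ, hBC⟩ := exists_isHermitian_posSemidef_neg_lyapunov h.1 hmin.isObservable
    h.re_star_dotProduct_transfer_nonneg
  have Z_posDef := posDef_of_posSemidef_neg_lyapunov h.1 hmin.isObservable_conjTranspose hZ hAZ hBC
  refine ⟨Z.map Complex.re, posDef_map_re Z_posDef, ?_, ?_⟩
  · convert posSemidef_map_re hAZ using 1
    rw [conjTranspose_map_ofReal, ← map_re_map_ofReal_mul, ← map_re_mul_map_ofReal]
    ext i j
    simp
  · rw [conjTranspose_map_ofReal] at hBC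
    rw [← map_re_map_ofReal_mul, ← map_re_mul_map_ofReal]
    ext i j
    simpa using congrArg Complex.re (congrFun₂ hBC i j)

theorem posDef_I_smul_tf_sub_iff (hA : IsHurwitz A) (hD : D = Dᵀ) (hY : Y.PosDef)
    (hL : Lᵀ * L = -(A * Y + Y * Aᵀ)) (hBC : B + A * Y * Cᵀ = 0) (hω : 0 < ω) :
    (Complex.I • (tf A B C D (Complex.I * ω) - (tf A B C D (Complex.I * ω))ᴴ)).PosDef ↔
      ((L * Y⁻¹ * A⁻¹).map Complex.ofReal *
        ((Complex.I * ω) • (1 : Matrix (Fin n) (Fin n) ℂ) - A.map Complex.ofReal)⁻¹ *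
        B.map Complex.ofReal).rank = m := by
  have conjTranspose_mul_self : (L.map Complex.ofReal)ᴴ * L.map Complex.ofReal =
      -(A.map Complex.ofReal * Y.map Complex.ofReal +
        Y.map Complex.ofReal * (A.map Complex.ofReal)ᴴ) := by
    rw [conjTranspose_map_ofReal, conjTranspose_map_ofReal, ← map_ofReal_mul, ← map_ofReal_mul,
      ← map_ofReal_mul, hL]
    ext i j
    simp
  have add_mul_eq_zero : B.map Complex.ofReal +
      A.map Complex.ofReal * Y.map Complex.ofReal * (C.map Complex.ofReal)ᴴ = 0 := by
    rw [conjTranspose_map_ofReal, ← map_ofReal_mul, ← map_ofReal_mul,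
      eq_neg_of_add_eq_zero_left hBC]
    ext i j
    simp
  have Y_isHermitian : (Y.map Complex.ofReal).IsHermitian := by
    rw [IsHermitian, conjTranspose_map_ofReal, ← conjTranspose_eq_transpose_of_trivial, hY.1.eq]
  have Y_isUnit : IsUnit (Y.map Complex.ofReal) := hY.isUnit.map Complex.ofRealHom.mapMatrix
  rw [tf_sub_conjTranspose hD, I_smul_transfer_sub_conjTranspose_eq_smul_conjTranspose_mul_self
      (isUnit_of_forall_re_neg hA) Y_isUnit (mem_resolventSet_of_re_nonneg hA (by simp))
      Y_isHermitian conjTranspose_mul_self add_mul_eq_zero,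
    posDef_smul_conjTranspose_mul_self_iff (by exact_mod_cast hω), Fintype.card_fin,
    resolvent_eq_nonsing_inv, map_ofReal_mul, map_ofReal_mul, map_ofReal_inv, map_ofReal_inv]

end RealSystems

/-- The weak Strictly Negative Imaginary Lemma. -/
theorem weak_sni_lemma {n m : ℕ}
    (A : Matrix (Fin n) (Fin n) ℝ) (B : Matrix (Fin n) (Fin m) ℝ)
    (C : Matrix (Fin m) (Fin n) ℝ) (D : Matrix (Fin m) (Fin m) ℝ)
    (hmin : IsMinimal A B C) :
    IsSNI A B C D ↔
      (IsHurwitz A ∧ D = Dᵀ ∧ B.rank = m ∧ C.rank = m ∧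
        ∃ (Y L : Matrix (Fin n) (Fin n) ℝ), Y.PosDef ∧
          Lᵀ * L = -(A * Y + Y * Aᵀ) ∧
          (-(A * Y + Y * Aᵀ)).PosSemidef ∧ B + A * Y * Cᵀ = 0 ∧
          ∀ ω : ℝ, 0 < ω →
            ((L * Y⁻¹ * A⁻¹).map Complex.ofReal *
              ((Complex.I * ω) • (1 : Matrix (Fin n) (Fin n) ℂ) - A.map Complex.ofReal)⁻¹ *
              B.map Complex.ofReal).rank = m) := by
  constructor
  · intro h
    obtain ⟨Y, hY, hAY, hBC⟩ := h.exists_posDef_lyapunov hmin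
    obtain ⟨L, hL⟩ := exists_transpose_mul_self_eq hAY
    have rank_eq (ω : ℝ) (hω : 0 < ω) :=
      (posDef_I_smul_tf_sub_iff h.1 h.eq_transpose hY hL hBC hω).1 (h.2 ω hω)
    have rank_B : B.rank = m := by
      simpa using rank_eq_card_of_rank_mul_map_ofReal_eq_card
        ((rank_eq 1 one_pos).trans (Fintype.card_fin m).symm)
    have rank_C : C.rank = m :=
      (rank_le_height C).antisymm
        (rank_B.symm.trans_le (rank_le_rank_of_add_mul_transpose_eq_zero hBC))
    exact ⟨h.1, h.eq_transpose, rank_B, rank_C, Y, L, hY, hL, hAY, hBC, rank_eq⟩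
  · rintro ⟨hA, hD, -, -, Y, L, hY, hL, -, hBC, rank_eq⟩
    exact ⟨hA, fun ω hω => (posDef_I_smul_tf_sub_iff hA hD hY hL hBC hω).2 (rank_eq ω hω)⟩
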